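/- Let d ≥ 1 be an integer. Suppose M has finite diameter and there exists l₀ > 0 with w₀ := π^{d/2}·l₀^d/Γ(d/2 + 1) ≤ 1 such that A(l) = π^{d/2}·l^d/Γ(d/2 + 1) (the volume of a Euclidean d-ball of radius l) for all 0 ≤ l ≤ l₀. Then for each fixed k ≥ 1 and each ρ with 1 − w₀ < ρ < 1, there exists a constant C > 0 such that for all N ≥ k: |E[D_k(N)] − (Γ(d/2 + 1)^{1/d}/√π) · (Γ(k + 1/d)/Γ(k)) · (Γ(N + 1)/Γ(N + 1 + 1/d))| ≤ C·ρ^N. -/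

import Mathlib

open MeasureTheory Metric Filter
open scoped ENNReal Topology

/-- The `k`-th smallest value (1-indexed) among the `N` real numbers `f 0, …, f (N-1)`. -/
noncomputable def kthVal {N : ℕ} (k : ℕ) (f : Fin N → ℝ) : ℝ :=
  (((Finset.univ : Finset (Fin N)).val.map f).sort (· ≤ ·)).getD (k - 1) 0

lemma sorted_get_le (t : ℝ) (l : List ℝ) (hl : l.Pairwise (· ≤ ·)) :
    ∀ k, k < l.length → (l.getD k 0 ≤ t ↔ k < l.countP (fun a => decide (a ≤ t))) := by
  induction l with
  | nil => intro k hk; simp at hk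
  | cons a l ih =>
    rw [List.pairwise_cons] at hl
    obtain ⟨h1, h2⟩ := hl
    intro k hk
    by_cases ha : a ≤ t
    · rw [List.countP_cons_of_pos (by simpa using ha)]
      cases k with
      | zero => simpa using ha
      | succ k =>
        have := ih h2 k (by simpa using hk)
        simpa using this
    · have h0 : (a :: l).countP (fun a => decide (a ≤ t)) = 0 := by
        rw [List.countP_eq_zero]
        intro b hb
        rcases List.mem_cons.1 hb with rfl | hb
        · simpa using ha
        · have := h1 b hb
          simp only [decide_eq_true_eq, not_le]
          push Not at ha
          linarith
      rw [h0]
      simp only [not_lt_zero, iff_false, not_le]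
      push Not at ha
      cases k with
      | zero => simpa using ha
      | succ k =>
        have hk' : k < l.length := by simpa using hk
        have := h1 l[k] (List.getElem_mem hk')
        simp [hk']
        linarith

lemma kthVal_le_iff {N k : ℕ} (hk : 1 ≤ k) (hkN : k ≤ N) (f : Fin N → ℝ) (t : ℝ) :
    kthVal k f ≤ t ↔ k ≤ (Finset.univ.filter (fun i => f i ≤ t)).card := by
  unfold kthVal
  rw [sorted_get_le t _ (Multiset.pairwise_sort _ _) _ (by simp; omega)]
  rw [← Multiset.coe_countP, Multiset.sort_eq, Multiset.countP_map]
  change _ < (Finset.univ.filter (fun i => f i ≤ t)).card ↔ _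
  omega

lemma gamma_int (n : ℕ) (hn : 1 ≤ n) (m : ℕ) : ∀ j : ℕ,
    ∫ u in (0:ℝ)..1, (u ^ n) ^ j * (1 - u ^ n) ^ m =
      (1 / (n:ℝ)) * Real.Gamma (j + 1 / (n:ℝ)) * m.factorial / Real.Gamma (j + 1 / (n:ℝ) + m + 1) := by
  have hn' : (0:ℝ) < n := by exact_mod_cast hn
  induction m with
  | zero =>
    intro j
    simp only [← pow_mul, pow_zero, mul_one, integral_pow]
    have hp : (0:ℝ) < j + 1 / (n:ℝ) := by positivity
    have hG := Real.Gamma_pos_of_pos hp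
    have e : (j + 1 / (n:ℝ) + ((0:ℕ):ℝ) + 1) = (j + 1 / (n:ℝ)) + 1 := by simp
    rw [e, Real.Gamma_add_one hp.ne']
    have : ((n * j : ℕ) : ℝ) + 1 ≠ 0 := by positivity
    push_cast at this ⊢
    have e2 : (n:ℝ) * j + 1 = n * (j + 1 / (n:ℝ)) := by field_simp
    rw [e2]
    simp
    field_simp
  | succ m ih =>
    intro j
    have h1 : ∀ u : ℝ, (u ^ n) ^ j * (1 - u ^ n) ^ (m+1) =
      (u ^ n) ^ j * (1 - u ^ n) ^ m - (u ^ n) ^ (j+1) * (1 - u ^ n) ^ m := by intro u; ring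
    simp only [h1]
    rw [intervalIntegral.integral_sub (Continuous.intervalIntegrable (by fun_prop) _ _)
      (Continuous.intervalIntegrable (by fun_prop) _ _), ih, ih]
    have hp : (0:ℝ) < j + 1 / (n:ℝ) := by positivity
    generalize hx : (j:ℝ) + 1 / (n:ℝ) = x at *
    have e1 : ((j + 1 : ℕ) : ℝ) + 1 / (n:ℝ) = x + 1 := by push_cast; linarith
    have e2 : x + ((m+1:ℕ):ℝ) + 1 = (x + m + 1) + 1 := by push_cast; ring
    have e3 : x + 1 + (m:ℝ) + 1 = (x + m + 1) + 1 := by ring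
    rw [e1, e2, e3, Real.Gamma_add_one hp.ne', Real.Gamma_add_one (by positivity : x + m + 1 ≠ 0),
      Nat.factorial_succ]
    have hG : Real.Gamma (x+m+1) ≠ 0 := (Real.Gamma_pos_of_pos (by positivity)).ne'
    have hG' : x+m+1 ≠ 0 := by positivity
    push_cast
    field_simp
    ring

lemma gamma_sum (a : ℝ) (ha : 0 < a) (k : ℕ) :
    ∑ j ∈ Finset.range (k+1), a * Real.Gamma (j + a) / j.factorial =
      Real.Gamma ((k+1:ℕ) + a) / Real.Gamma (k+1:ℕ) := by
  induction k with
  | zero => simp [add_comm (1:ℝ), Real.Gamma_add_one ha.ne']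
  | succ k ih =>
    rw [Finset.sum_range_succ, ih]
    have e : (((k+1+1 : ℕ) : ℝ) + a) = ((k+1:ℕ) + a) + 1 := by push_cast; ring
    rw [e, Real.Gamma_add_one (by positivity), Nat.cast_succ k, Real.Gamma_nat_eq_factorial,
      Nat.cast_succ (k+1), Real.Gamma_nat_eq_factorial, Nat.factorial_succ]
    push_cast
    have : (k.factorial : ℝ) ≠ 0 := by positivity
    field_simp

noncomputable def binF (N k : ℕ) (p : ℝ) : ℝ :=
  ∑ j ∈ Finset.range k, (N.choose j : ℝ) * (p ^ j * (1 - p) ^ (N - j))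

lemma binF_int (n : ℕ) (hn : 1 ≤ n) (N k : ℕ) (hk : 1 ≤ k) (hkN : k ≤ N) :
    ∫ u in (0:ℝ)..1, binF N k (u ^ n) =
      (Real.Gamma (k + 1 / (n : ℝ)) / Real.Gamma k) *
            (Real.Gamma (N + 1) / Real.Gamma (N + 1 + 1 / (n : ℝ))) := by
  have hn' : (0:ℝ) < n := by exact_mod_cast hn
  unfold binF
  rw [intervalIntegral.integral_finsetSum
    (fun _ _ => Continuous.intervalIntegrable (by fun_prop) _ _)]
  obtain ⟨k, rfl⟩ : ∃ k', k = k' + 1 := ⟨k - 1, by omega⟩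
  rw [← gamma_sum (1/(n:ℝ)) (by positivity) k, Finset.sum_mul]
  refine Finset.sum_congr rfl fun j hj => ?_
  have hjN : j ≤ N := by have := Finset.mem_range.1 hj; omega
  rw [intervalIntegral.integral_const_mul, gamma_int n hn, Real.Gamma_nat_eq_factorial,
    Nat.cast_choose ℝ hjN]
  have e : (j:ℝ) + 1 / (n:ℝ) + ((N - j : ℕ):ℝ) + 1 = N + 1 + 1/(n:ℝ) := by
    rw [Nat.cast_sub hjN]; ring
  rw [e]
  have : ((N-j).factorial : ℝ) ≠ 0 := by positivity
  have : (j.factorial : ℝ) ≠ 0 := by positivity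
  field_simp

lemma binF_nonneg (N k : ℕ) (p : ℝ) (h0 : 0 ≤ p) (h1 : p ≤ 1) : 0 ≤ binF N k p := by
  have : 0 ≤ 1 - p := by linarith
  unfold binF; positivity

lemma binF_le (N k : ℕ) (hkN : k ≤ N) (p w ρ : ℝ) (h0 : 0 ≤ p) (h1 : p ≤ 1) (hw : w ≤ p)
    (hw1 : w ≤ 1) (hρ : 1 - w < ρ) (hρ1 : ρ < 1) :
    binF N k p ≤ ((ρ - (1 - w)) ^ k)⁻¹ * ρ ^ N := by
  set z := ρ - (1 - w) with hz
  have hz0 : 0 < z := by linarith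
  have hz1 : z ≤ 1 := by linarith
  have hq : 0 ≤ 1 - p := by linarith
  rw [inv_mul_eq_div, le_div_iff₀ (by positivity)]
  calc binF N k p * z ^ k ≤ ∑ j ∈ Finset.range k, (z*p)^j * (1-p)^(N-j) * (N.choose j : ℝ) := by
        unfold binF
        rw [Finset.sum_mul]
        refine Finset.sum_le_sum fun j hj => ?_
        have hjk := (Finset.mem_range.1 hj).le
        have := pow_le_pow_of_le_one hz0.le hz1 hjk
        calc _ ≤ (N.choose j : ℝ) * (p ^ j * (1 - p) ^ (N - j)) * z ^ j := by gcongr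
          _ = _ := by rw [mul_pow]; ring
    _ ≤ ∑ j ∈ Finset.range (N+1), (z*p)^j * (1-p)^(N-j) * (N.choose j : ℝ) := by
        apply Finset.sum_le_sum_of_subset_of_nonneg
        · exact Finset.range_subset_range.2 (by omega)
        · intros; positivity
    _ = (z*p + (1-p))^N := (add_pow _ _ _).symm
    _ ≤ ρ ^ N := by
        gcongr
        nlinarith

lemma measure_count {M : Type*} [MeasurableSpace M] (μ : Measure M) [IsProbabilityMeasure μ]
    (B : Set M) [DecidablePred (· ∈ B)] (hB : MeasurableSet B) (N k : ℕ) (hkN : k ≤ N) :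
    (Measure.pi fun _ : Fin N => μ).real
      {ω | (Finset.univ.filter (fun i => ω i ∈ B)).card < k} = binF N k (μ.real B) := by
  classical
  let E : Finset (Fin N) → Set (Fin N → M) := fun S =>
    Set.pi Set.univ (fun i => if i ∈ S then B else Bᶜ)
  have hE : ∀ S ω, ω ∈ E S ↔ Finset.univ.filter (fun i => ω i ∈ B) = S := by
    intro S ω
    simp only [E, Set.mem_univ_pi, Finset.ext_iff, Finset.mem_filter, Finset.mem_univ, true_and]
    refine forall_congr' fun i => ?_
    by_cases h : i ∈ S <;> simp [h]
  have hU : {ω : Fin N → M | (Finset.univ.filter (fun i => ω i ∈ B)).card < k} =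
      ⋃ S ∈ (Finset.univ.powerset.filter (fun S : Finset (Fin N) => S.card < k)), E S := by
    ext ω
    simp [hE]
  have hEm : ∀ S, MeasurableSet (E S) := by
    intro S
    refine MeasurableSet.univ_pi fun i => ?_
    split_ifs
    · exact hB
    · exact hB.compl
  rw [hU, measureReal_biUnion_finset]
  · have hS : ∀ S, (Measure.pi fun _ : Fin N => μ).real (E S) =
        (μ.real B) ^ S.card * (1 - μ.real B) ^ (N - S.card) := by
      intro S
      simp only [E, measureReal_def, Measure.pi_pi, ENNReal.toReal_prod]
      simp only [← measureReal_def]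
      have : ∀ i, μ.real (if i ∈ S then B else Bᶜ) = if i ∈ S then μ.real B else 1 - μ.real B := by
        intro i; split_ifs
        · rfl
        · rw [probReal_compl_eq_one_sub hB]
      simp only [this]
      rw [Finset.prod_ite]
      simp [Finset.filter_not, Finset.card_sdiff]
    rw [Finset.sum_filter]
    simp only [hS]
    rw [Finset.sum_powerset_apply_card
      (fun m => if m < k then (μ.real B) ^ m * (1 - μ.real B) ^ (N - m) else 0)]
    unfold binF
    simp only [Finset.card_univ, Fintype.card_fin, nsmul_eq_mul, mul_ite, mul_zero]
    rw [← Finset.sum_filter]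
    refine Finset.sum_congr ?_ fun _ _ => rfl
    ext j; simp; omega
  · intro S _ T _ hST
    refine Set.disjoint_left.2 fun ω h1 h2 => hST ?_
    rw [← (hE S ω).1 h1, (hE T ω).1 h2]
  · intro S _; exact hEm S

/-- Let `M` be a separable metric space of finite diameter carrying a Borel
probability measure `μ`, fix `x ∈ M`, `k ≥ 1` and an integer dimension `n ≥ 1`.  Suppose there
is `l₀ > 0` with `w₀ := π^(n/2) l₀^n / Γ(n/2+1) ≤ 1` such that
`A(l) = μ(closedBall x l) = π^(n/2) l^n / Γ(n/2+1)` (the volume of a Euclidean `n`-ball of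
radius `l`) for all `0 ≤ l ≤ l₀`.  Then for each `ρ ∈ (1 − w₀, 1)` there is `C > 0` such that
for all `N ≥ k`, the expected `k`-th nearest-neighbor distance (for `N` i.i.d. sites, product
measure on `Fin N → M`) satisfies
`|E[D_k(N)] − (Γ(n/2+1)^(1/n)/√π) (Γ(k+1/n)/Γ(k)) (Γ(N+1)/Γ(N+1+1/n))| ≤ C ρ^N`. -/
theorem kth_nearest_distance_flat_d_dim
    {M : Type*} [MetricSpace M] [TopologicalSpace.SeparableSpace M]
    [MeasurableSpace M] [BorelSpace M]
    (μ : Measure M) [IsProbabilityMeasure μ]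
    (hdiam : EMetric.diam (Set.univ : Set M) < ⊤)
    (x : M) (k : ℕ) (hk : 1 ≤ k) (n : ℕ) (hn : 1 ≤ n)
    (l₀ : ℝ) (hl₀ : 0 < l₀)
    (hw₀ : Real.pi ^ ((n : ℝ) / 2) * l₀ ^ n / Real.Gamma ((n : ℝ) / 2 + 1) ≤ 1)
    (hA : ∀ l : ℝ, 0 ≤ l → l ≤ l₀ →
      (μ (closedBall x l)).toReal =
        Real.pi ^ ((n : ℝ) / 2) * l ^ n / Real.Gamma ((n : ℝ) / 2 + 1))
    (ρ : ℝ)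
    (hρ₁ : 1 - Real.pi ^ ((n : ℝ) / 2) * l₀ ^ n / Real.Gamma ((n : ℝ) / 2 + 1) < ρ)
    (hρ₂ : ρ < 1) :
    ∃ C > 0, ∀ N : ℕ, k ≤ N →
      |(∫ ω : Fin N → M, kthVal k (fun i => dist x (ω i))
            ∂(Measure.pi fun _ : Fin N => μ)) -
          (Real.Gamma ((n : ℝ) / 2 + 1)) ^ (1 / (n : ℝ)) / Real.sqrt Real.pi *
            (Real.Gamma (k + 1 / (n : ℝ)) / Real.Gamma k) *
            (Real.Gamma (N + 1) / Real.Gamma (N + 1 + 1 / (n : ℝ)))| ≤ C * ρ ^ N := by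
  have hn' : (0:ℝ) < n := by exact_mod_cast hn
  set g := Real.Gamma ((n : ℝ) / 2 + 1) with hg
  have hg0 : 0 < g := Real.Gamma_pos_of_pos (by positivity)
  set c := Real.pi ^ ((n : ℝ) / 2) / g with hc
  have hc0 : 0 < c := div_pos (Real.rpow_pos_of_pos Real.pi_pos _) hg0
  have hcl : ∀ l : ℝ, Real.pi ^ ((n : ℝ) / 2) * l ^ n / g = c * l ^ n := by
    intro l; rw [hc]; ring
  simp only [hcl] at hw₀ hA hρ₁
  set L₁ := g ^ (1 / (n : ℝ)) / Real.sqrt Real.pi with hL₁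
  have hL₁0 : 0 < L₁ := div_pos (Real.rpow_pos_of_pos hg0 _) (Real.sqrt_pos.2 Real.pi_pos)
  have hcL : c * L₁ ^ n = 1 := by
    have e1 : (g ^ (1 / (n : ℝ))) ^ n = g := by
      rw [← Real.rpow_natCast, ← Real.rpow_mul hg0.le]
      rw [one_div_mul_cancel hn'.ne', Real.rpow_one]
    have e2 : (Real.sqrt Real.pi) ^ n = Real.pi ^ ((n : ℝ) / 2) := by
      rw [Real.sqrt_eq_rpow, ← Real.rpow_natCast, ← Real.rpow_mul Real.pi_pos.le]
      congr 1; ring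
    have h3 : Real.pi ^ ((n : ℝ) / 2) ≠ 0 := (Real.rpow_pos_of_pos Real.pi_pos _).ne'
    rw [hL₁, div_pow, e1, e2, hc]
    field_simp
  have hl₀L : l₀ ≤ L₁ := by
    by_contra h
    push Not at h
    have : L₁ ^ n < l₀ ^ n := pow_lt_pow_left₀ h hL₁0.le (by omega)
    nlinarith
  set w := c * l₀ ^ n with hw
  have hρ0 : 0 < ρ := by linarith
  set K := ((ρ - (1 - w)) ^ k)⁻¹ with hK
  have hK0 : 0 < K := by
    have : 0 < ρ - (1 - w) := by linarith
    positivity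
  set R := max L₁ (EMetric.diam (Set.univ : Set M)).toReal with hR
  have hRL : L₁ ≤ R := le_max_left _ _
  have hdist : ∀ y, dist x y ≤ R := by
    intro y
    refine le_trans ?_ (le_max_right _ _)
    rw [dist_edist]
    exact ENNReal.toReal_mono hdiam.ne (EMetric.edist_le_diam_of_mem (Set.mem_univ _) (Set.mem_univ _))
  refine ⟨K * (R - l₀) + K * (L₁ - l₀) + 1, ?_, ?_⟩
  · have h1 : 0 ≤ R - l₀ := by linarith
    have h2 : 0 ≤ L₁ - l₀ := by linarith
    positivity
  intro N hkN
  set P := Measure.pi fun _ : Fin N => μ with hP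
  set D : (Fin N → M) → ℝ := fun ω => kthVal k (fun i => dist x (ω i)) with hD
  have hDle : ∀ ω t, D ω ≤ t ↔ k ≤ (Finset.univ.filter (fun i => dist x (ω i) ≤ t)).card :=
    fun ω t => kthVal_le_iff hk hkN _ t
  -- tail probabilities
  have hset : ∀ t, {ω | t < D ω} =
      {ω : Fin N → M | (Finset.univ.filter (fun i => dist x (ω i) ≤ t)).card < k} := by
    intro t; ext ω
    simp only [Set.mem_setOf_eq]
    rw [← not_le, hDle, not_le]
  have hDm : Measurable D := by
    refine measurable_of_Iic fun t => ?_
    have : D ⁻¹' Set.Iic t = ⋃ S ∈ (Finset.univ.filter (fun S : Finset (Fin N) => k ≤ S.card)),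
        ⋂ i ∈ S, {ω : Fin N → M | dist x (ω i) ≤ t} := by
      ext ω
      simp only [Set.mem_preimage, Set.mem_Iic, hDle, Set.mem_iUnion, Finset.mem_filter,
        Finset.mem_univ, true_and, Set.mem_iInter, Set.mem_setOf_eq, exists_prop]
      constructor
      · intro h
        exact ⟨_, h, fun i hi => by simpa using hi⟩
      · rintro ⟨S, hS, h⟩
        exact hS.trans (Finset.card_le_card fun i hi => by simpa using h i hi)
    rw [this]
    refine Finset.measurableSet_biUnion _ fun S _ => Finset.measurableSet_biInter _ fun i _ => ?_
    have : {ω : Fin N → M | dist x (ω i) ≤ t} = (fun ω : Fin N → M => ω i) ⁻¹' closedBall x t := by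
      ext ω; simp [dist_comm]
    rw [this]
    exact measurable_pi_apply i measurableSet_closedBall
  have hD0 : ∀ ω, 0 ≤ D ω := by
    intro ω
    by_contra h
    push Not at h
    have h1 := (hDle ω (D ω)).1 le_rfl
    have h2 : (Finset.univ.filter (fun i => dist x (ω i) ≤ D ω)) = ∅ := by
      refine Finset.filter_false_of_mem fun i _ hi => ?_
      have := dist_nonneg (x := x) (y := ω i)
      linarith
    rw [h2] at h1
    simp at h1
    omega
  have hDR : ∀ ω, D ω ≤ R := by
    intro ω
    rw [hDle, Finset.filter_true_of_mem (fun i _ => hdist _)]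
    simpa using hkN
  have hint : Integrable D P := by
    refine Integrable.of_bound hDm.aestronglyMeasurable R (ae_of_all _ fun ω => ?_)
    rw [Real.norm_of_nonneg (hD0 ω)]; exact hDR ω
  set A : ℝ → ℝ := fun t => μ.real (closedBall x t) with hAdef
  have hA' : ∀ l : ℝ, 0 ≤ l → l ≤ l₀ → A l = c * l ^ n := hA
  have hG : ∀ t, P.real {ω | t < D ω} = binF N k (A t) := by
    intro t
    rw [hset]
    have := measure_count μ {y | dist x y ≤ t}
      (by simpa [closedBall, dist_comm] using (measurableSet_closedBall : MeasurableSet (closedBall x t)))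
      N k hkN
    have hcb : {y | dist x y ≤ t} = closedBall x t := by
      ext y; simp [dist_comm]
    rw [show A t = μ.real {y | dist x y ≤ t} by rw [hcb]]
    exact this
  set G : ℝ → ℝ := fun t => P.real {ω | t < D ω} with hGdef
  have hGanti : Antitone G := by
    intro s t hst
    refine measureReal_mono ?_
    intro ω h
    exact lt_of_le_of_lt hst h
  have hE : ∫ ω, D ω ∂P = ∫ t in (0:ℝ)..R, G t := by
    rw [hint.integral_eq_integral_meas_lt (ae_of_all _ hD0),
      intervalIntegral.integral_of_le (hL₁0.le.trans hRL)]
    refine setIntegral_eq_of_subset_of_forall_diff_eq_zero measurableSet_Ioi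
      Set.Ioc_subset_Ioi_self ?_
    intro t ht
    have htR : R < t := by
      by_contra h
      push Not at h
      exact ht.2 ⟨ht.1, h⟩
    have : {ω | t < D ω} = ∅ := by
      ext ω
      simp only [Set.mem_setOf_eq, Set.mem_empty_iff_false, iff_false, not_lt]
      exact (hDR ω).trans htR.le
    rw [this]; simp
  set H : ℝ → ℝ := fun t => binF N k (c * t ^ n) with hH
  have hHc : Continuous H := by
    rw [hH]; unfold binF; fun_prop
  have hmain : L₁ * (Real.Gamma (k + 1 / (n : ℝ)) / Real.Gamma k) *
      (Real.Gamma (N + 1) / Real.Gamma (N + 1 + 1 / (n : ℝ))) = ∫ t in (0:ℝ)..L₁, H t := by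
    rw [mul_assoc, ← binF_int n hn N k hk hkN]
    have := intervalIntegral.mul_integral_comp_mul_right (a := 0) (b := 1) (f := H) L₁
    rw [zero_mul, one_mul] at this
    rw [← this]
    congr 2
    ext u
    rw [hH]
    simp only
    congr 1
    rw [mul_pow]
    linear_combination (-u ^ n) * hcL
  rw [hE, hmain]
  rw [← intervalIntegral.integral_add_adjacent_intervals (b := l₀)
      hGanti.intervalIntegrable hGanti.intervalIntegrable,
    ← intervalIntegral.integral_add_adjacent_intervals (a := 0) (b := l₀) (c := L₁)
      (hHc.intervalIntegrable _ _) (hHc.intervalIntegrable _ _)]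
  have heq : ∫ t in (0:ℝ)..l₀, G t = ∫ t in (0:ℝ)..l₀, H t := by
    refine intervalIntegral.integral_congr fun t ht => ?_
    rw [Set.uIcc_of_le hl₀.le] at ht
    change P.real {ω | t < D ω} = binF N k (c * t ^ n)
    rw [hG, hA' t ht.1 ht.2]
  have hb1 : |∫ t in l₀..R, G t| ≤ K * ρ ^ N * |R - l₀| := by
    rw [← Real.norm_eq_abs]
    refine intervalIntegral.norm_integral_le_of_norm_le_const fun t ht => ?_
    rw [Set.uIoc_of_le (by linarith)] at ht
    rw [Real.norm_of_nonneg measureReal_nonneg, hG]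
    have hwA : w ≤ A t := by
      rw [hw, ← hA' l₀ hl₀.le le_rfl]
      exact measureReal_mono (closedBall_subset_closedBall ht.1.le)
    exact binF_le N k hkN (A t) w ρ measureReal_nonneg measureReal_le_one hwA hw₀ hρ₁ hρ₂
  have hb2 : |∫ t in l₀..L₁, H t| ≤ K * ρ ^ N * |L₁ - l₀| := by
    rw [← Real.norm_eq_abs]
    refine intervalIntegral.norm_integral_le_of_norm_le_const fun t ht => ?_
    rw [Set.uIoc_of_le hl₀L] at ht
    have ht0 : 0 ≤ t := hl₀.le.trans ht.1.le
    have h0 : 0 ≤ c * t ^ n := by positivity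
    have h1 : c * t ^ n ≤ 1 := by
      rw [← hcL]; have := ht.2; gcongr
    have h2 : w ≤ c * t ^ n := by
      rw [hw]; have := ht.1.le; gcongr
    rw [Real.norm_of_nonneg (binF_nonneg _ _ _ h0 h1)]
    exact binF_le N k hkN _ w ρ h0 h1 h2 hw₀ hρ₁ hρ₂
  rw [abs_of_nonneg (by linarith : 0 ≤ R - l₀)] at hb1
  rw [abs_of_nonneg (by linarith : 0 ≤ L₁ - l₀)] at hb2
  rw [heq, add_sub_add_left_eq_sub]
  have hpos : 0 < ρ ^ N := by positivity
  calc _ ≤ |∫ t in l₀..R, G t| + |∫ t in l₀..L₁, H t| := abs_sub _ _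
    _ ≤ _ := by nlinarith
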